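/- In the finite fully-branched C^{1+α} IFS setting with its dimension-δ Gibbs measure μ, if the Measure Non-Linearity condition (MNL) holds, then (QNL) holds: there exist ρ, Θ ∈ (0,1) and C_QNL > 0 such that for every interval I ⊂ ℝ and every n ≥ 1, Σ_{a,b,c,d∈𝒜ⁿ} μ(I_a)μ(I_b)μ(I_c)μ(I_d)·1_I(Δ_n((a,x_c),(b,x_d))) ≤ C_QNL(|I|^Θ + ρⁿ), where Δ_n((a,x),(b,y)) := (log|g_a'(x)| − log|g_b'(x)|) − (log|g_a'(y)| − log|g_b'(y)|) and x_a is a fixed reference point of I_a. -/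

import Mathlib

open MeasureTheory
open scoped ENNReal

noncomputable section

/-- The geometric part of a finite, fully-branched `C^{1+α}` iterated function system:
finitely many `C¹` contractions `g a` of a compact interval `J = [lo, hi]` with
`0 < κm ≤ |g_a'| ≤ κp < 1` and pairwise disjoint images. -/
structure FiniteIFS where
  A : Type
  finA : Finite A
  neA : Nonempty A
  lo : ℝ
  hi : ℝ
  hlohi : lo < hi
  g : A → ℝ → ℝ
  gd : A → ℝ → ℝ
  hderiv : ∀ a, ∀ x ∈ Set.Icc lo hi, HasDerivAt (g a) (gd a x) x
  hmaps : ∀ a, Set.MapsTo (g a) (Set.Icc lo hi) (Set.Icc lo hi)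
  κm : ℝ
  κp : ℝ
  hκm : 0 < κm
  hκp : κp < 1
  hcontr : ∀ a, ∀ x ∈ Set.Icc lo hi, κm ≤ |gd a x| ∧ |gd a x| ≤ κp
  hdisj : ∀ a b : A, a ≠ b → Disjoint (g a '' Set.Icc lo hi) (g b '' Set.Icc lo hi)

namespace FiniteIFS

variable (S : FiniteIFS)

/-- The ambient compact interval `J`. -/
def J : Set ℝ := Set.Icc S.lo S.hi

/-- The composition `g_{a₁} ∘ ⋯ ∘ g_{a_n}` along a word. -/
def gW : List S.A → ℝ → ℝ
  | [], x => x
  | a :: l, x => S.g a (gW l x)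

/-- The chain-rule derivative of `gW` along a word. -/
def gD : List S.A → ℝ → ℝ
  | [], _ => 1
  | a :: l, x => S.gd a (S.gW l x) * gD l x

/-- The cylinder interval `I_a = g_a(J)`. -/
def cyl (l : List S.A) : Set ℝ := S.gW l '' S.J

/-- The attractor `F = ⋂ₙ ⋃_{a∈𝒜ⁿ} I_a`. -/
def attract : Set ℝ := ⋂ n : ℕ, ⋃ a : Fin (n + 1) → S.A, S.cyl (List.ofFn a)

/-- The distortion fluctuation `X_a(x,y) = log|g_a'(x)| − log|g_a'(y)|`. -/
def X (l : List S.A) (x y : ℝ) : ℝ := Real.log |S.gD l x| - Real.log |S.gD l y|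

/-- The finite-scale temporal distance. -/
def Delta (a b : List S.A) (x y : ℝ) : ℝ := S.X a x y - S.X b x y

end FiniteIFS

/-- A finite fully-branched `C^{1+α}` IFS together with its dimension-`δ` Gibbs
(equilibrium) measure `μ` for the potential `δ·log|g'|`, where `δ = dim_H F`. -/
structure FiniteGibbsIFS extends FiniteIFS where
  refPt : List A → ℝ
  refPt_mem : ∀ l, refPt l ∈ toFiniteIFS.cyl l
  δ : ℝ
  hδ : δ ∈ Set.Ioo (0:ℝ) 1
  hdim : ENNReal.ofReal δ = dimH toFiniteIFS.attract
  Cstar : ℝ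
  hCstar : 1 ≤ Cstar
  hXHolder : ∀ l : List A, ∀ x ∈ Set.Icc lo hi, ∀ y ∈ Set.Icc lo hi,
    |toFiniteIFS.X l x y| ≤ Cstar * |x - y| ^ δ
  hmult : ∀ l l' : List A,
    Metric.diam (toFiniteIFS.cyl (l ++ l')) ≤
        Cstar * (Metric.diam (toFiniteIFS.cyl l) * Metric.diam (toFiniteIFS.cyl l')) ∧
      Metric.diam (toFiniteIFS.cyl l) * Metric.diam (toFiniteIFS.cyl l') ≤
        Cstar * Metric.diam (toFiniteIFS.cyl (l ++ l'))
  μ : Measure ℝ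
  hprob : IsProbabilityMeasure μ
  hsupp : μ (toFiniteIFS.attract)ᶜ = 0
  hfrostman : ∀ l : List A,
    (μ (toFiniteIFS.cyl l)).toReal ≤ Cstar * Metric.diam (toFiniteIFS.cyl l) ^ δ ∧
      Metric.diam (toFiniteIFS.cyl l) ^ δ ≤ Cstar * (μ (toFiniteIFS.cyl l)).toReal
  w : List A → ℝ → ℝ
  hw : ∀ l : List A, ∀ x ∈ Set.Icc lo hi,
    (μ (toFiniteIFS.cyl l)).toReal ≤ Cstar * w l x ∧
      w l x ≤ Cstar * (μ (toFiniteIFS.cyl l)).toReal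
  conformal : ∀ n : ℕ, ∀ f : ℝ → ℝ, Continuous f →
    ∫ x, f x ∂μ = ∑' a : Fin n → A,
      ∫ x, w (List.ofFn a) x * f (toFiniteIFS.gW (List.ofFn a) x) ∂μ

namespace FiniteGibbsIFS

variable (S : FiniteGibbsIFS)

abbrev J : Set ℝ := S.toFiniteIFS.J
abbrev gW : List S.A → ℝ → ℝ := S.toFiniteIFS.gW
abbrev gD : List S.A → ℝ → ℝ := S.toFiniteIFS.gD
abbrev cyl : List S.A → Set ℝ := S.toFiniteIFS.cyl
abbrev attract : Set ℝ := S.toFiniteIFS.attract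
abbrev X : List S.A → ℝ → ℝ → ℝ := S.toFiniteIFS.X
abbrev Delta : List S.A → List S.A → ℝ → ℝ → ℝ := S.toFiniteIFS.Delta

/-- The Measure Non-Linearity condition (MNL): for every `N ≥ 1` there are words
`a, b ∈ 𝒜^N` such that the pushforward of `μ` under `X_a(·,x₀) - X_b(·,x₀)` is
absolutely non-concentrated: it gives mass at most `C_MNL |I|` to every interval `I`,
uniformly in `x₀ ∈ F`. -/
def MNL (CM : ℝ) : Prop :=
  ∀ N : ℕ, 1 ≤ N → ∃ a b : Fin N → S.A,
    ∀ x₀ ∈ S.attract, ∀ u v : ℝ, u ≤ v →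
      S.μ {x : ℝ | x ∈ S.attract ∧
          S.X (List.ofFn a) x x₀ - S.X (List.ofFn b) x x₀ ∈ Set.Icc u v}
        ≤ ENNReal.ofReal (CM * (v - u))

end FiniteGibbsIFS

end

/-!
Fix `b` and `y = x_d`, and for a word `a` let `B a` be the set of words `D` with
`Δ((a, x_D), (b, y)) ∈ I`. Let `e, f` be the pair of words of a large length `N` given by (MNL).
If `a` ends in `e ++ c`, `a'` ends in `f ++ c` and `D ∈ B a ∩ B a'`, then subtracting the two
conditions eliminates `b` and leaves `|Δ((a, x_D), (a', y))| ≤ |I|`. By Hölder distortion this makes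
`X_e - X_f` nearly constant on the points `g_c(x_D)`. Were every one of the words `N` generations
below a node `d` to have such a descendant `D`, it would be nearly constant on the cylinder of
`c ++ d`, which (MNL) forbids as long as `|I_{c ++ d}|^δ` is much larger than `|I|`. So each node
above that scale has a child with no descendant in `B a ∩ B a'`, and the mass of `B a ∩ B a'` decays
geometrically with the number of generations.

Consequently, in `L²` of the variable `D`, the averages of `1_{B a}` over the `a` ending in `e ++ c`
and over those ending in `f ++ c` are almost orthogonal, and the norm of the average over all `a`
ending in `c` drops by a definite factor. Iterating over the suffix of `a` bounds the four-fold sum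
by a constant times `q ^ k`, `q < 1`, whenever `k N ≤ n` and `|I|` is at most a constant times
`τ ^ k`; the best `k` gives the exponents.
-/

open scoped Topology

/-! ### Sums over the tree of words -/

section WordTree

variable {A : Type*}

/-- Nonnegative weights on words that are multiplicative under concatenation up to the
factor `K`. -/
structure IsQuasiMultiplicative (q : List A → ℝ) (K : ℝ) : Prop where
  nonneg : ∀ l, 0 ≤ q l
  append_le : ∀ l l', q (l ++ l') ≤ K * (q l * q l')
  mul_le : ∀ l l', q l * q l' ≤ K * q (l ++ l')

namespace IsQuasiMultiplicative

variable {q : List A → ℝ} {K : ℝ}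

theorem reverse (h : IsQuasiMultiplicative q K) :
    IsQuasiMultiplicative (fun l => q l.reverse) K where
  nonneg l := h.nonneg _
  append_le l l' := by
    rw [List.reverse_append, mul_comm (q l.reverse)]
    exact h.append_le _ _
  mul_le l l' := by
    rw [List.reverse_append, mul_comm (q l.reverse)]
    exact h.mul_le _ _

theorem rpow (h : IsQuasiMultiplicative q K) (hK : 0 ≤ K) {s : ℝ} (hs : 0 ≤ s) :
    IsQuasiMultiplicative (fun l => q l ^ s) (K ^ s) where
  nonneg l := Real.rpow_nonneg (h.nonneg l) s
  append_le l l' := by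
    rw [← Real.mul_rpow (h.nonneg l) (h.nonneg l'),
      ← Real.mul_rpow hK (mul_nonneg (h.nonneg l) (h.nonneg l'))]
    exact Real.rpow_le_rpow (h.nonneg _) (h.append_le l l') hs
  mul_le l l' := by
    rw [← Real.mul_rpow (h.nonneg l) (h.nonneg l'), ← Real.mul_rpow hK (h.nonneg _)]
    exact Real.rpow_le_rpow (mul_nonneg (h.nonneg l) (h.nonneg l')) (h.mul_le l l') hs

theorem of_comparable (h : IsQuasiMultiplicative q K) (hK : 0 ≤ K) {q' : List A → ℝ} {C : ℝ}
    (hC : 0 ≤ C) (hq' : ∀ l, 0 ≤ q' l) (hle : ∀ l, q' l ≤ C * q l) (hge : ∀ l, q l ≤ C * q' l) :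
    IsQuasiMultiplicative q' (C ^ 3 * K) where
  nonneg := hq'
  append_le l l' :=
    calc q' (l ++ l') ≤ C * q (l ++ l') := hle _
      _ ≤ C * (K * (q l * q l')) := by gcongr; exact h.append_le l l'
      _ ≤ C * (K * ((C * q' l) * (C * q' l'))) := by
        have := mul_le_mul (hge l) (hge l') (h.nonneg l') (mul_nonneg hC (hq' l))
        gcongr
      _ = C ^ 3 * K * (q' l * q' l') := by ring
  mul_le l l' :=
    calc q' l * q' l' ≤ (C * q l) * (C * q l') :=
          mul_le_mul (hle l) (hle l') (hq' l') (mul_nonneg hC (h.nonneg l))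
      _ = C ^ 2 * (q l * q l') := by ring
      _ ≤ C ^ 2 * (K * q (l ++ l')) := mul_le_mul_of_nonneg_left (h.mul_le l l') (sq_nonneg C)
      _ ≤ C ^ 2 * (K * (C * q' (l ++ l'))) := by gcongr; exact hge _
      _ = C ^ 3 * K * q' (l ++ l') := by ring

end IsQuasiMultiplicative

variable [Finite A]

/-- The words of length `n`, as lists, so that words of different lengths can be concatenated. -/
noncomputable def words (A : Type*) [Finite A] (n : ℕ) : Finset (List A) :=
  (List.finite_length_eq A n).toFinset

/-- The sum of `f` over the nodes `r` generations below `d` in the tree of words. For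
`f = T.indicator q` this is the `q`-mass of `T` below `d`. -/
noncomputable def descendantSum {M : Type*} [AddCommMonoid M] (f : List A → M) (d : List A)
    (r : ℕ) : M :=
  ∑ t ∈ words A r, f (d ++ t)

@[simp]
theorem mem_words {n : ℕ} {l : List A} : l ∈ words A n ↔ l.length = n := by
  simp [words]

theorem sum_words_add {M : Type*} [AddCommMonoid M] (f : List A → M) (m n : ℕ) :
    ∑ l ∈ words A (m + n), f l = ∑ z ∈ words A m, ∑ t ∈ words A n, f (z ++ t) := by
  rw [← Finset.sum_product']
  refine Finset.sum_nbij' (fun l => (l.take m, l.drop m)) (fun x => x.1 ++ x.2) ?_ ?_ ?_ ?_ ?_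
  · intro l hl
    simp [mem_words.1 hl]
  · rintro ⟨z, t⟩ h
    simp_all
  · simp
  · rintro ⟨z, t⟩ h
    simp [← mem_words.1 (Finset.mem_product.1 h).1]
  · simp

theorem sum_words_reverse {M : Type*} [AddCommMonoid M] (f : List A → M) (n : ℕ) :
    ∑ l ∈ words A n, f l.reverse = ∑ l ∈ words A n, f l :=
  Finset.sum_nbij' List.reverse List.reverse (by simp) (by simp) (by simp) (by simp) (by simp)

theorem sum_words_eq_sum_ofFn {A M : Type*} [Fintype A] [AddCommMonoid M] (f : List A → M)
    (n : ℕ) : ∑ l ∈ words A n, f l = ∑ a : Fin n → A, f (List.ofFn a) := by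
  refine (Finset.sum_bij (fun a _ => List.ofFn a) (by simp)
    (fun a _ b _ h => List.ofFn_injective h) (fun l hl => ?_) (by simp)).symm
  obtain rfl := mem_words.1 hl
  exact ⟨l.get, Finset.mem_univ _, List.ofFn_get l⟩

theorem descendantSum_nil {M : Type*} [AddCommMonoid M] (f : List A → M) (n : ℕ) :
    descendantSum f [] n = ∑ l ∈ words A n, f l := rfl

theorem descendantSum_add {M : Type*} [AddCommMonoid M] (f : List A → M) (d : List A) (m r : ℕ) :
    descendantSum f d (m + r) = ∑ z ∈ words A m, descendantSum f (d ++ z) r := by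
  simp only [descendantSum, sum_words_add, List.append_assoc]

theorem descendantSum_nonneg {q : List A → ℝ} (hq : ∀ l, 0 ≤ q l) (d : List A) (r : ℕ) :
    0 ≤ descendantSum q d r :=
  Finset.sum_nonneg fun _ _ => hq _

/-- Each node `N` generations below `d` carries at least the proportion `p` of the `q`-mass of
`d`, whatever the generation at which these masses are measured. -/
def HasChildProportion (q : List A → ℝ) (N : ℕ) (p : ℝ) : Prop :=
  ∀ d r, ∀ z ∈ words A N, p * descendantSum q d (N + r) ≤ descendantSum q (d ++ z) r

theorem HasChildProportion.mono {q : List A → ℝ} {N : ℕ} {p p' : ℝ}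
    (h : HasChildProportion q N p) (hq : ∀ l, 0 ≤ q l) (hp : p' ≤ p) :
    HasChildProportion q N p' := fun d r z hz =>
  (mul_le_mul_of_nonneg_right hp (descendantSum_nonneg hq d _)).trans (h d r z hz)

theorem descendantSum_indicator_le_of_missing_child {q : List A → ℝ} {T : Set (List A)} {N L : ℕ}
    {p : ℝ} (hq : ∀ l, 0 ≤ q l) (hp : p ≤ 1) (hchild : HasChildProportion q N p)
    (hmiss : ∀ d : List A, d.length ≤ L → ∃ z ∈ words A N, ∀ t, d ++ z ++ t ∉ T) (r k : ℕ)
    (d : List A) (hd : d.length + k * N ≤ L) :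
    descendantSum (T.indicator q) d (k * N + r) ≤ (1 - p) ^ k * descendantSum q d (k * N + r) := by
  classical
  induction k generalizing d with
  | zero =>
    rw [pow_zero, one_mul]
    exact Finset.sum_le_sum fun t _ => Set.indicator_le_self' (fun _ _ => hq _) (d ++ t)
  | succ k ih =>
    obtain ⟨z₀, hz₀, hz₀T⟩ := hmiss d (by lia)
    have hmiss₀ : descendantSum (T.indicator q) (d ++ z₀) (k * N + r) = 0 :=
      Finset.sum_eq_zero fun t _ => Set.indicator_of_notMem (hz₀T t) _
    rw [show (k + 1) * N + r = N + (k * N + r) by ring]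
    set V := descendantSum q d (N + (k * N + r)) with hV
    have hsplit : ∑ z ∈ (words A N).erase z₀, descendantSum q (d ++ z) (k * N + r)
        = V - descendantSum q (d ++ z₀) (k * N + r) := by
      rw [hV, descendantSum_add, ← Finset.add_sum_erase _ _ hz₀, add_sub_cancel_left]
    calc descendantSum (T.indicator q) d (N + (k * N + r))
        = ∑ z ∈ (words A N).erase z₀, descendantSum (T.indicator q) (d ++ z) (k * N + r) := by
          rw [descendantSum_add, ← Finset.add_sum_erase _ _ hz₀, hmiss₀, zero_add]
      _ ≤ ∑ z ∈ (words A N).erase z₀, (1 - p) ^ k * descendantSum q (d ++ z) (k * N + r) := by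
          refine Finset.sum_le_sum fun z hz => ih (d ++ z) ?_
          rw [List.length_append, mem_words.1 (Finset.mem_of_mem_erase hz)]
          lia
      _ = (1 - p) ^ k * (V - descendantSum q (d ++ z₀) (k * N + r)) := by
          rw [← Finset.mul_sum, hsplit]
      _ ≤ (1 - p) ^ k * (V - p * V) :=
          mul_le_mul_of_nonneg_left (sub_le_sub_left (hchild d _ z₀ hz₀) V)
            (pow_nonneg (sub_nonneg.2 hp) k)
      _ = (1 - p) ^ (k + 1) * V := by ring

namespace IsQuasiMultiplicative

variable {q : List A → ℝ} {K : ℝ}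

theorem descendantSum_le (h : IsQuasiMultiplicative q K) (d : List A) (r : ℕ) :
    descendantSum q d r ≤ K * (q d * descendantSum q [] r) := by
  simp only [descendantSum, List.nil_append, Finset.mul_sum]
  exact Finset.sum_le_sum fun t _ => h.append_le d t

theorem mul_descendantSum_le (h : IsQuasiMultiplicative q K) (d : List A) (r : ℕ) :
    q d * descendantSum q [] r ≤ K * descendantSum q d r := by
  simp only [descendantSum, List.nil_append, Finset.mul_sum]
  exact Finset.sum_le_sum fun t _ => h.mul_le d t

theorem hasChildProportion (h : IsQuasiMultiplicative q K) (hK : 0 < K) {N : ℕ} {p : ℝ}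
    (hp0 : 0 ≤ p) (hp : ∀ z ∈ words A N, p * (K ^ 4 * ∑ z ∈ words A N, q z) ≤ q z) :
    HasChildProportion q N p := by
  intro d r z hz
  set D := descendantSum q [] r
  have hD : 0 ≤ D := descendantSum_nonneg h.nonneg [] r
  have hd := h.nonneg d
  have hparent : descendantSum q d (N + r) ≤ K ^ 2 * (q d * D) * ∑ z ∈ words A N, q z := by
    rw [descendantSum_add, Finset.mul_sum]
    refine Finset.sum_le_sum fun z _ => (h.descendantSum_le (d ++ z) r).trans ?_
    calc K * (q (d ++ z) * D) ≤ K * (K * (q d * q z) * D) := by gcongr; exact h.append_le d z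
      _ = K ^ 2 * (q d * D) * q z := by ring
  have hchild : q z * (q d * D) ≤ K ^ 2 * descendantSum q (d ++ z) r :=
    calc q z * (q d * D) = q d * q z * D := by ring
      _ ≤ K * q (d ++ z) * D := mul_le_mul_of_nonneg_right (h.mul_le d z) hD
      _ = K * (q (d ++ z) * D) := by ring
      _ ≤ K * (K * descendantSum q (d ++ z) r) :=
        mul_le_mul_of_nonneg_left (h.mul_descendantSum_le _ r) hK.le
      _ = K ^ 2 * descendantSum q (d ++ z) r := by ring
  refine le_of_mul_le_mul_left ?_ (pow_pos hK 2)
  calc K ^ 2 * (p * descendantSum q d (N + r))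
      ≤ K ^ 2 * (p * (K ^ 2 * (q d * D) * ∑ z ∈ words A N, q z)) := by gcongr
    _ = p * (K ^ 4 * ∑ z ∈ words A N, q z) * (q d * D) := by ring
    _ ≤ q z * (q d * D) := by gcongr; exact hp z hz
    _ ≤ K ^ 2 * descendantSum q (d ++ z) r := hchild

theorem exists_hasChildProportion (h : IsQuasiMultiplicative q K) (hK : 0 < K)
    (hpos : ∀ l, 0 < q l) (N : ℕ) : ∃ p ∈ Set.Ioc (0 : ℝ) 1, HasChildProportion q N p := by
  have hsmall : ∀ᶠ p in 𝓝[>] (0 : ℝ), ∀ z ∈ words A N,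
      p * (K ^ 4 * ∑ z ∈ words A N, q z) ≤ q z := by
    refine nhdsWithin_le_nhds <| (Filter.eventually_all_finset _).2 fun z _ => ?_
    refine ((continuous_mul_const _).tendsto' 0 0 (zero_mul _)).eventually_le_const (hpos z)
  obtain ⟨p, hp, hpIoc⟩ := (hsmall.and (Ioc_mem_nhdsGT one_pos)).exists
  exact ⟨p, hpIoc, h.hasChildProportion hK hpIoc.1.le hp⟩

end IsQuasiMultiplicative

/-! ### Averages of almost orthogonal vectors -/

section AlmostOrthogonal

variable {E : Type*} [NormedAddCommGroup E] [InnerProductSpace ℝ E]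

-- Without the cross term, `‖x + y‖` is governed by `√(a² + b²)` instead of `a + b`, and
-- `√(a² + b²) ≤ a + b - t / 2`.
theorem norm_add_le_of_inner_le {x y : E} {M ε a b t : ℝ} (hM : 0 ≤ M) (hε : 0 ≤ ε) (ht : 0 ≤ t)
    (hta : t ≤ a) (htb : t ≤ b) (hx : ‖x‖ ≤ M * a) (hy : ‖y‖ ≤ M * b)
    (hxy : inner ℝ x y ≤ ε ^ 2 * (a * b)) : ‖x + y‖ ≤ M * (a + b - t / 2) + ε * (a + b) := by
  have hsq : a ^ 2 + b ^ 2 ≤ (a + b - t / 2) ^ 2 := by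
    nlinarith [mul_nonneg (ht.trans hta) (sub_nonneg.2 htb),
      mul_nonneg (ht.trans htb) (sub_nonneg.2 hta), sq_nonneg t]
  have hs : 0 ≤ M * (a + b - t / 2) := mul_nonneg hM (by linarith)
  have hs' : 0 ≤ ε * (a + b) := mul_nonneg hε (by linarith)
  refine le_of_sq_le_sq ?_ (add_nonneg hs hs')
  calc ‖x + y‖ ^ 2 = ‖x‖ ^ 2 + 2 * inner ℝ x y + ‖y‖ ^ 2 := norm_add_sq_real x y
    _ ≤ (M * a) ^ 2 + 2 * (ε ^ 2 * (a * b)) + (M * b) ^ 2 := by gcongr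
    _ ≤ M ^ 2 * (a ^ 2 + b ^ 2) + (ε * (a + b)) ^ 2 := by
      nlinarith [mul_nonneg (sq_nonneg ε) (add_nonneg (sq_nonneg a) (sq_nonneg b))]
    _ ≤ M ^ 2 * (a + b - t / 2) ^ 2 + (ε * (a + b)) ^ 2 := by gcongr
    _ ≤ (M * (a + b - t / 2) + ε * (a + b)) ^ 2 := by nlinarith [mul_nonneg hs hs']

theorem inner_descendantSum_smul_le {q : List A → ℝ} (hq : ∀ l, 0 ≤ q l) {v : List A → E}
    {d d' : List A} {η : ℝ} (hη : ∀ t t', inner ℝ (v (d ++ t)) (v (d' ++ t')) ≤ η) (r : ℕ) :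
    inner ℝ (descendantSum (fun l => q l • v l) d r) (descendantSum (fun l => q l • v l) d' r)
      ≤ η * (descendantSum q d r * descendantSum q d' r) := by
  simp only [descendantSum]
  rw [sum_inner, Finset.sum_mul_sum, Finset.mul_sum]
  refine Finset.sum_le_sum fun t _ => ?_
  rw [inner_sum, Finset.mul_sum]
  refine Finset.sum_le_sum fun t' _ => ?_
  rw [real_inner_smul_left, real_inner_smul_right, ← mul_assoc, mul_comm η]
  exact mul_le_mul_of_nonneg_left (hη t t') (mul_nonneg (hq _) (hq _))

theorem norm_descendantSum_smul_le_of_norm_le_one {q : List A → ℝ} (hq : ∀ l, 0 ≤ q l)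
    {v : List A → E} (hv : ∀ l, ‖v l‖ ≤ 1) (d : List A) (r : ℕ) :
    ‖descendantSum (fun l => q l • v l) d r‖ ≤ descendantSum q d r :=
  norm_sum_le_of_le _ fun t _ => by
    rw [norm_smul, Real.norm_of_nonneg (hq _)]
    exact mul_le_of_le_one_right (hq _) (hv _)

theorem norm_descendantSum_smul_le {q : List A → ℝ} {v : List A → E} {N L : ℕ} {p ε : ℝ}
    {e f : List A} (hq : ∀ l, 0 ≤ q l) (hp : p ∈ Set.Ioc (0 : ℝ) 1) (hε : 0 ≤ ε)
    (hchild : HasChildProportion q N p) (he : e ∈ words A N) (hf : f ∈ words A N) (hef : e ≠ f)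
    (hv : ∀ l, ‖v l‖ ≤ 1)
    (hinner : ∀ c : List A, c.length ≤ L → ∀ t t',
      inner ℝ (v (c ++ e ++ t)) (v (c ++ f ++ t')) ≤ ε ^ 2)
    (r k : ℕ) (d : List A) (hd : d.length + k * N ≤ L) :
    ‖descendantSum (fun l => q l • v l) d (k * N + r)‖
      ≤ ((1 - p / 2) ^ k + 2 / p * ε) * descendantSum q d (k * N + r) := by
  classical
  obtain ⟨hp0, hp1⟩ := hp
  induction k generalizing d with
  | zero =>
    refine (norm_descendantSum_smul_le_of_norm_le_one hq hv d _).trans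
      (le_mul_of_one_le_left (descendantSum_nonneg hq d _) ?_)
    rw [pow_zero, le_add_iff_nonneg_right]
    positivity
  | succ k ih =>
    rw [show (k + 1) * N + r = N + (k * N + r) by ring]
    set S : List A → E := fun z => descendantSum (fun l => q l • v l) (d ++ z) (k * N + r)
    set U : List A → ℝ := fun z => descendantSum q (d ++ z) (k * N + r)
    set V := descendantSum q d (N + (k * N + r)) with hV
    -- `2 / p * ε` is the fixed point of the recursion `M ↦ M * (1 - p / 2) + ε`.
    set M := (1 - p / 2) ^ k + 2 / p * ε with hM
    have hM0 : 0 ≤ M := add_nonneg (pow_nonneg (by linarith) k) (by positivity)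
    have hU : ∀ z, 0 ≤ U z := fun z => descendantSum_nonneg hq _ _
    have hpair : {e, f} ⊆ words A N := by simp [Finset.insert_subset_iff, he, hf]
    have hVU : V = ∑ z ∈ words A N \ {e, f}, U z + (U e + U f) := by
      rw [hV, descendantSum_add, ← Finset.sum_sdiff hpair, Finset.sum_pair hef]
    have hSU : ∀ z ∈ words A N, ‖S z‖ ≤ M * U z := fun z hz => ih (d ++ z) <| by
      rw [List.length_append, mem_words.1 hz]
      lia
    have hrest : ‖∑ z ∈ words A N \ {e, f}, S z‖ ≤ M * ∑ z ∈ words A N \ {e, f}, U z := by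
      rw [Finset.mul_sum]
      exact norm_sum_le_of_le _ fun z hz => hSU z (Finset.mem_sdiff.1 hz).1
    have hgain : ‖S e + S f‖ ≤ M * (U e + U f - p * V / 2) + ε * (U e + U f) :=
      norm_add_le_of_inner_le hM0 hε (mul_nonneg hp0.le (descendantSum_nonneg hq d _))
        (hchild d _ e he) (hchild d _ f hf) (hSU e he) (hSU f hf)
        (inner_descendantSum_smul_le hq (hinner d (by lia)) _)
    have hUV : U e + U f ≤ V := hVU ▸ le_add_of_nonneg_left (Finset.sum_nonneg fun z _ => hU z)
    calc ‖descendantSum (fun l => q l • v l) d (N + (k * N + r))‖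
        = ‖∑ z ∈ words A N \ {e, f}, S z + (S e + S f)‖ := by
          rw [descendantSum_add, ← Finset.sum_sdiff hpair, Finset.sum_pair hef]
      _ ≤ M * ∑ z ∈ words A N \ {e, f}, U z
            + (M * (U e + U f - p * V / 2) + ε * (U e + U f)) :=
          (norm_add_le _ _).trans (add_le_add hrest hgain)
      _ = M * (1 - p / 2) * V + ε * (U e + U f) := by rw [hVU]; ring
      _ ≤ M * (1 - p / 2) * V + ε * V := by gcongr
      _ = ((1 - p / 2) ^ (k + 1) + 2 / p * ε) * V := by rw [hM]; field_simp; ring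

end AlmostOrthogonal

end WordTree

section WeightedIndicator

variable {ι : Type*} {W : Finset ι} {w : ι → ℝ}

/-- The indicator of `B` as a vector of `ℓ²(W, w)`, the weights being absorbed into the
coordinates. -/
noncomputable def indicatorVec (W : Finset ι) (w : ι → ℝ) (B : Set ι) : EuclideanSpace ℝ W :=
  WithLp.toLp 2 fun i => B.indicator (fun i => √(w i)) i

theorem inner_indicatorVec (hw : ∀ i, 0 ≤ w i) (B B' : Set ι) :
    inner ℝ (indicatorVec W w B) (indicatorVec W w B') = ∑ i ∈ W, (B ∩ B').indicator w i := by
  rw [PiLp.inner_apply, ← Finset.sum_coe_sort W]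
  refine Finset.sum_congr rfl fun i _ => ?_
  by_cases hB : (i : ι) ∈ B <;> by_cases hB' : (i : ι) ∈ B' <;>
    simp [indicatorVec, hB, hB', Real.sq_sqrt (hw i)]

theorem norm_indicatorVec_le_one (hw : ∀ i, 0 ≤ w i) (hW : ∑ i ∈ W, w i ≤ 1) (B : Set ι) :
    ‖indicatorVec W w B‖ ≤ 1 := by
  rw [← sq_le_one_iff₀ (norm_nonneg _), ← real_inner_self_eq_norm_sq, inner_indicatorVec hw]
  exact (Finset.sum_le_sum fun i _ => Set.indicator_le_self' (fun _ _ => hw _) i).trans hW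

theorem sum_words_mul_sum_indicator_le {A : Type*} [Finite A] (hw : ∀ i, 0 ≤ w i)
    (hW : ∑ i ∈ W, w i ≤ 1) {q : List A → ℝ} {N : ℕ} {p ε : ℝ} {e f : List A} (hq : ∀ l, 0 ≤ q l)
    (hp : p ∈ Set.Ioc (0 : ℝ) 1) (hε : 0 ≤ ε) (hchild : HasChildProportion q N p)
    (he : e ∈ words A N) (hf : f ∈ words A N) (hef : e ≠ f) (B : List A → Set ι) (k r : ℕ)
    (hB : ∀ c : List A, c.length ≤ k * N → ∀ t t',
      ∑ i ∈ W, (B (c ++ e ++ t) ∩ B (c ++ f ++ t')).indicator w i ≤ ε ^ 2) :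
    ∑ l ∈ words A (k * N + r), q l * ∑ i ∈ W, (B l).indicator w i
      ≤ ((1 - p / 2) ^ k + 2 / p * ε) * ∑ l ∈ words A (k * N + r), q l := by
  set v : List A → EuclideanSpace ℝ W := fun l => indicatorVec W w (B l)
  have hnorm := norm_descendantSum_smul_le hq hp hε hchild he hf hef
    (fun l => norm_indicatorVec_le_one hw hW (B l))
    (fun c hc t t' => (inner_indicatorVec hw _ _).trans_le (hB c hc t t')) r k [] (by simp)
  calc ∑ l ∈ words A (k * N + r), q l * ∑ i ∈ W, (B l).indicator w i
      = inner ℝ (∑ l ∈ words A (k * N + r), q l • v l) (indicatorVec W w Set.univ) := by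
        simp [v, sum_inner, real_inner_smul_left, inner_indicatorVec hw]
    _ ≤ ‖∑ l ∈ words A (k * N + r), q l • v l‖ * 1 :=
        (real_inner_le_norm _ _).trans <|
          mul_le_mul_of_nonneg_left (norm_indicatorVec_le_one hw hW _) (norm_nonneg _)
    _ ≤ _ := (mul_one _).trans_le hnorm

end WeightedIndicator

/-! ### Geometry of cylinders -/

namespace FiniteIFS

variable (S : FiniteIFS)

instance : Finite S.A := S.finA

theorem gW_mem (l : List S.A) {x : ℝ} (hx : x ∈ Set.Icc S.lo S.hi) :
    S.gW l x ∈ Set.Icc S.lo S.hi := by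
  induction l with
  | nil => exact hx
  | cons a l ih => exact S.hmaps a ih

theorem gW_append (l l' : List S.A) (x : ℝ) : S.gW (l ++ l') x = S.gW l (S.gW l' x) := by
  induction l with
  | nil => rfl
  | cons a l ih => simp [gW, ih]

theorem gD_append (l l' : List S.A) (x : ℝ) :
    S.gD (l ++ l') x = S.gD l (S.gW l' x) * S.gD l' x := by
  induction l with
  | nil => simp [gD]
  | cons a l ih => simp [gD, ih, gW_append, mul_assoc]

theorem gD_ne_zero (l : List S.A) {x : ℝ} (hx : x ∈ Set.Icc S.lo S.hi) : S.gD l x ≠ 0 := by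
  induction l with
  | nil => simp [gD]
  | cons a l ih =>
    have hpos : 0 < |S.gd a (S.gW l x)| := S.hκm.trans_le (S.hcontr a _ (S.gW_mem l hx)).1
    exact mul_ne_zero (abs_pos.1 hpos) ih

theorem X_append (l l' : List S.A) {x y : ℝ} (hx : x ∈ Set.Icc S.lo S.hi)
    (hy : y ∈ Set.Icc S.lo S.hi) :
    S.X (l ++ l') x y = S.X l (S.gW l' x) (S.gW l' y) + S.X l' x y := by
  have hlog : ∀ z ∈ Set.Icc S.lo S.hi, Real.log |S.gD (l ++ l') z|
      = Real.log |S.gD l (S.gW l' z)| + Real.log |S.gD l' z| := by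
    intro z hz
    rw [gD_append, abs_mul, Real.log_mul (abs_ne_zero.2 (S.gD_ne_zero l (S.gW_mem l' hz)))
      (abs_ne_zero.2 (S.gD_ne_zero l' hz))]
  rw [X, X, X, hlog x hx, hlog y hy]
  ring

theorem Delta_append (s s' e f c : List S.A) {x y : ℝ} (hx : x ∈ Set.Icc S.lo S.hi)
    (hy : y ∈ Set.Icc S.lo S.hi) :
    S.Delta (s ++ (e ++ c)) (s' ++ (f ++ c)) x y = S.Delta e f (S.gW c x) (S.gW c y)
      + (S.X s (S.gW e (S.gW c x)) (S.gW e (S.gW c y))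
        - S.X s' (S.gW f (S.gW c x)) (S.gW f (S.gW c y))) := by
  simp only [Delta, X_append S _ _ hx hy, gW_append]
  ring

theorem Delta_sub_Delta (a b : List S.A) (x y z : ℝ) :
    S.Delta a b x z - S.Delta a b y z = S.Delta a b x y := by
  simp only [Delta, X]
  ring

theorem abs_g_sub_mem_Icc (a : S.A) {x y : ℝ} (hx : x ∈ Set.Icc S.lo S.hi)
    (hy : y ∈ Set.Icc S.lo S.hi) :
    |S.g a x - S.g a y| ∈ Set.Icc (S.κm * |x - y|) (S.κp * |x - y|) := by
  wlog hxy : x < y generalizing x y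
  · rcases (not_lt.1 hxy).eq_or_lt with rfl | hyx
    · simp
    · rw [abs_sub_comm x y, abs_sub_comm (S.g a x)]
      exact this hy hx hyx
  have hsub : Set.Icc x y ⊆ Set.Icc S.lo S.hi := Set.Icc_subset_Icc hx.1 hy.2
  obtain ⟨c, hc, hslope⟩ := exists_hasDerivAt_eq_slope (S.g a) (S.gd a) hxy
    (fun z hz => (S.hderiv a z (hsub hz)).continuousAt.continuousWithinAt)
    (fun z hz => S.hderiv a z (hsub (Set.Ioo_subset_Icc_self hz)))
  have habs : |S.g a x - S.g a y| = |S.gd a c| * |x - y| := by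
    rw [hslope, abs_sub_comm, abs_sub_comm x y, ← abs_mul,
      div_mul_cancel₀ _ (sub_ne_zero.2 hxy.ne')]
  obtain ⟨hm, hp⟩ := S.hcontr a c (hsub (Set.Ioo_subset_Icc_self hc))
  rw [habs]
  exact ⟨mul_le_mul_of_nonneg_right hm (abs_nonneg _), mul_le_mul_of_nonneg_right hp (abs_nonneg _)⟩

theorem injOn_g (a : S.A) : Set.InjOn (S.g a) (Set.Icc S.lo S.hi) := by
  intro x hx y hy hxy
  have hle := (S.abs_g_sub_mem_Icc a hx hy).1
  rw [hxy, sub_self, abs_zero] at hle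
  exact sub_eq_zero.1 (abs_nonpos_iff.1 (nonpos_of_mul_nonpos_right hle S.hκm))

theorem κm_le_κp : S.κm ≤ S.κp := by
  obtain ⟨a⟩ := S.neA
  obtain ⟨hm, hp⟩ := S.hcontr a S.lo (Set.left_mem_Icc.2 S.hlohi.le)
  exact hm.trans hp

theorem κp_pos : 0 < S.κp := S.hκm.trans_le S.κm_le_κp

theorem κm_lt_one : S.κm < 1 := S.κm_le_κp.trans_lt S.hκp

theorem abs_gW_sub_mem_Icc (l : List S.A) {x y : ℝ} (hx : x ∈ Set.Icc S.lo S.hi)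
    (hy : y ∈ Set.Icc S.lo S.hi) :
    |S.gW l x - S.gW l y| ∈ Set.Icc (S.κm ^ l.length * |x - y|) (S.κp ^ l.length * |x - y|) := by
  induction l with
  | nil => simp [gW]
  | cons a l ih =>
    obtain ⟨hm, hp⟩ := S.abs_g_sub_mem_Icc a (S.gW_mem l hx) (S.gW_mem l hy)
    simp only [gW, List.length_cons, pow_succ', mul_assoc]
    exact ⟨(mul_le_mul_of_nonneg_left ih.1 S.hκm.le).trans hm,
      hp.trans (mul_le_mul_of_nonneg_left ih.2 S.κp_pos.le)⟩

theorem cyl_subset (l : List S.A) : S.cyl l ⊆ Set.Icc S.lo S.hi := by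
  rintro _ ⟨x, hx, rfl⟩
  exact S.gW_mem l hx

theorem cyl_append_subset (l l' : List S.A) : S.cyl (l ++ l') ⊆ S.cyl l := by
  rintro _ ⟨x, hx, rfl⟩
  exact ⟨S.gW l' x, S.gW_mem l' hx, (S.gW_append l l' x).symm⟩

theorem gW_mem_cyl_append (l : List S.A) {l' : List S.A} {x : ℝ} (hx : x ∈ S.cyl l') :
    S.gW l x ∈ S.cyl (l ++ l') := by
  obtain ⟨t, ht, rfl⟩ := hx
  exact ⟨t, ht, S.gW_append l l' t⟩

theorem abs_sub_le_diam_cyl {l : List S.A} {x y : ℝ} (hx : x ∈ S.cyl l) (hy : y ∈ S.cyl l) :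
    |x - y| ≤ Metric.diam (S.cyl l) :=
  Metric.dist_le_diam_of_mem ((Metric.isBounded_Icc _ _).subset (S.cyl_subset l)) hx hy

theorem diam_cyl_le (l : List S.A) :
    Metric.diam (S.cyl l) ≤ S.κp ^ l.length * (S.hi - S.lo) := by
  have h0 : 0 ≤ S.κp ^ l.length := pow_nonneg S.κp_pos.le _
  refine Metric.diam_le_of_forall_dist_le (mul_nonneg h0 (sub_nonneg.2 S.hlohi.le)) ?_
  rintro _ ⟨x, hx, rfl⟩ _ ⟨y, hy, rfl⟩
  refine (S.abs_gW_sub_mem_Icc l hx hy).2.trans (mul_le_mul_of_nonneg_left ?_ h0)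
  exact abs_sub_le_of_le_of_le hx.1 hx.2 hy.1 hy.2

theorem le_diam_cyl (l : List S.A) :
    S.κm ^ l.length * (S.hi - S.lo) ≤ Metric.diam (S.cyl l) := by
  have hlo : S.lo ∈ Set.Icc S.lo S.hi := Set.left_mem_Icc.2 S.hlohi.le
  have hhi : S.hi ∈ Set.Icc S.lo S.hi := Set.right_mem_Icc.2 S.hlohi.le
  rw [← abs_of_pos (sub_pos.2 S.hlohi)]
  exact (S.abs_gW_sub_mem_Icc l hhi hlo).1.trans
    (S.abs_sub_le_diam_cyl ⟨_, hhi, rfl⟩ ⟨_, hlo, rfl⟩)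

theorem diam_cyl_pos (l : List S.A) : 0 < Metric.diam (S.cyl l) :=
  (mul_pos (pow_pos S.hκm _) (sub_pos.2 S.hlohi)).trans_le (S.le_diam_cyl l)

theorem eq_of_mem_cyl {l l' : List S.A} (hlen : l.length = l'.length) {x : ℝ}
    (hx : x ∈ S.cyl l) (hx' : x ∈ S.cyl l') : l = l' := by
  induction l generalizing l' x with
  | nil => exact (List.length_eq_zero_iff.1 hlen.symm).symm
  | cons a l ih =>
    match l', hlen with
    | b :: l', hlen =>
      obtain ⟨t, ht, rfl⟩ := hx
      obtain ⟨t', ht', heq⟩ := hx'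
      simp only [gW] at heq
      obtain rfl : a = b := by
        by_contra hab
        exact Set.disjoint_left.1 (S.hdisj a b hab) ⟨_, S.gW_mem l ht, rfl⟩
          ⟨_, S.gW_mem l' ht', heq⟩
      have htail : S.gW l' t' = S.gW l t := S.injOn_g a (S.gW_mem l' ht') (S.gW_mem l ht) heq
      rw [ih (by simpa using hlen) (x := S.gW l t) ⟨t, ht, rfl⟩ ⟨t', ht', htail⟩]

theorem pairwiseDisjoint_cyl (n : ℕ) :
    (words S.A n : Set (List S.A)).PairwiseDisjoint S.cyl := by
  intro l hl l' hl' hne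
  rw [Finset.mem_coe, mem_words] at hl hl'
  exact Set.disjoint_left.2 fun x hx hx' => hne (S.eq_of_mem_cyl (hl.trans hl'.symm) hx hx')

theorem continuousOn_gW (l : List S.A) : ContinuousOn (S.gW l) (Set.Icc S.lo S.hi) := by
  induction l with
  | nil => exact continuousOn_id
  | cons a l ih =>
    have hg : ContinuousOn (S.g a) (Set.Icc S.lo S.hi) :=
      fun z hz => (S.hderiv a z hz).continuousAt.continuousWithinAt
    exact hg.comp ih fun _ => S.gW_mem l

theorem measurableSet_cyl (l : List S.A) : MeasurableSet (S.cyl l) :=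
  (isCompact_Icc.image_of_continuousOn (S.continuousOn_gW l)).measurableSet

theorem exists_mem_cyl_append {x : ℝ} (hx : x ∈ S.attract) {l : List S.A} (hxl : x ∈ S.cyl l)
    (N : ℕ) : ∃ z ∈ words S.A N, x ∈ S.cyl (l ++ z) := by
  obtain ⟨a, ha⟩ := Set.mem_iUnion.1 (Set.mem_iInter.1 hx (l.length + N))
  set w := List.ofFn a with hw
  have hlen : w.length = l.length + N + 1 := by rw [hw, List.length_ofFn]
  have hprefix : w.take l.length = l := by
    refine S.eq_of_mem_cyl (x := x) (by simp [hlen]; lia) ?_ hxl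
    exact S.cyl_append_subset _ (w.drop l.length) (by rwa [List.take_append_drop])
  have hsplit : w = l ++ (w.drop l.length).take N ++ (w.drop l.length).drop N := by
    rw [List.append_assoc, List.take_append_drop]
    exact (List.take_append_drop l.length w).symm.trans (by rw [hprefix])
  refine ⟨(w.drop l.length).take N, by simp [hlen]; lia, ?_⟩
  exact S.cyl_append_subset _ _ (hsplit ▸ ha)

end FiniteIFS

/-! ### Gibbs weights and non-concentrated pairs of words -/

namespace FiniteGibbsIFS

variable (S : FiniteGibbsIFS)

/-- The Gibbs weight `μ(I_l)` of the word `l`. -/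
def wt (l : List S.A) : ℝ := S.μ.real (S.cyl l)

theorem wt_nonneg (l : List S.A) : 0 ≤ S.wt l := measureReal_nonneg

theorem Cstar_pos : 0 < S.Cstar := zero_lt_one.trans_le S.hCstar

theorem diam_cyl_rpow_pos (l : List S.A) : 0 < Metric.diam (S.cyl l) ^ S.δ :=
  Real.rpow_pos_of_pos (S.diam_cyl_pos l) _

theorem wt_pos (l : List S.A) : 0 < S.wt l :=
  pos_of_mul_pos_right ((S.diam_cyl_rpow_pos l).trans_le (S.hfrostman l).2) S.Cstar_pos.le

theorem isQuasiMultiplicative_wt :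
    IsQuasiMultiplicative S.wt (S.Cstar ^ 3 * S.Cstar ^ S.δ) :=
  have hdiam : IsQuasiMultiplicative (fun l => Metric.diam (S.cyl l)) S.Cstar :=
    ⟨fun _ => Metric.diam_nonneg, fun l l' => (S.hmult l l').1, fun l l' => (S.hmult l l').2⟩
  (hdiam.rpow S.Cstar_pos.le S.hδ.1.le).of_comparable (Real.rpow_nonneg S.Cstar_pos.le _)
    S.Cstar_pos.le S.wt_nonneg (fun l => (S.hfrostman l).1) fun l => (S.hfrostman l).2

theorem sum_wt_le_one (n : ℕ) : ∑ l ∈ words S.A n, S.wt l ≤ 1 := by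
  have := S.hprob
  exact (measureReal_biUnion_finset (S.pairwiseDisjoint_cyl n)
    fun l _ => S.measurableSet_cyl l).symm.trans_le measureReal_le_one

theorem exists_hasChildProportion_wt (N : ℕ) : ∃ p ∈ Set.Ioc (0 : ℝ) 1,
    HasChildProportion S.wt N p ∧ HasChildProportion (fun l => S.wt l.reverse) N p := by
  have hqm := S.isQuasiMultiplicative_wt
  have hK : 0 < S.Cstar ^ 3 * S.Cstar ^ S.δ :=
    mul_pos (pow_pos S.Cstar_pos 3) (Real.rpow_pos_of_pos S.Cstar_pos _)
  obtain ⟨p, ⟨hp0, hp1⟩, hp⟩ := hqm.exists_hasChildProportion hK S.wt_pos N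
  obtain ⟨p', ⟨hp0', -⟩, hp'⟩ :=
    hqm.reverse.exists_hasChildProportion hK (fun l => S.wt_pos l.reverse) N
  exact ⟨min p p', ⟨lt_min hp0 hp0', (min_le_left _ _).trans hp1⟩,
    hp.mono S.wt_nonneg (min_le_left _ _), hp'.mono (fun l => S.wt_nonneg _) (min_le_right _ _)⟩

theorem measure_attract : S.μ S.attract = 1 := by
  have := S.hprob
  rw [← Set.univ_inter S.attract, measure_inter_conull S.hsupp, measure_univ]

theorem attract_nonempty : S.attract.Nonempty :=
  nonempty_of_measure_ne_zero (S.measure_attract.trans_ne one_ne_zero)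

theorem refPt_mem_Icc (l : List S.A) : S.refPt l ∈ Set.Icc S.lo S.hi :=
  S.cyl_subset l (S.refPt_mem l)

theorem abs_X_le (l : List S.A) {x y m : ℝ} (hx : x ∈ Set.Icc S.lo S.hi)
    (hy : y ∈ Set.Icc S.lo S.hi) (hm : |x - y| ≤ m) : |S.X l x y| ≤ S.Cstar * m ^ S.δ :=
  (S.hXHolder l x hx y hy).trans <| mul_le_mul_of_nonneg_left
    (Real.rpow_le_rpow (abs_nonneg _) hm S.hδ.1.le) S.Cstar_pos.le

theorem abs_Delta_le (a b : List S.A) {x y m : ℝ} (hx : x ∈ Set.Icc S.lo S.hi)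
    (hy : y ∈ Set.Icc S.lo S.hi) (hm : |x - y| ≤ m) :
    |S.Delta a b x y| ≤ 2 * (S.Cstar * m ^ S.δ) :=
  (abs_sub _ _).trans <|
    (add_le_add (S.abs_X_le a hx hy hm) (S.abs_X_le b hx hy hm)).trans_eq (two_mul _).symm

/-- A bound for the size, relative to that of a cylinder, of its subcylinders `N` generations
below and of its images under words of length `N`. -/
def relScale (N : ℕ) : ℝ := (1 + S.Cstar * (S.hi - S.lo)) * S.κp ^ N

theorem κp_pow_le_relScale (N : ℕ) : S.κp ^ N ≤ S.relScale N :=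
  le_mul_of_one_le_left (pow_nonneg S.κp_pos.le N) <|
    le_add_of_nonneg_right (mul_nonneg S.Cstar_pos.le (sub_nonneg.2 S.hlohi.le))

theorem relScale_nonneg (N : ℕ) : 0 ≤ S.relScale N :=
  (pow_nonneg S.κp_pos.le N).trans (S.κp_pow_le_relScale N)

theorem tendsto_relScale : Filter.Tendsto S.relScale Filter.atTop (𝓝 0) := by
  have h := (tendsto_pow_atTop_nhds_zero_of_lt_one S.κp_pos.le S.hκp).const_mul
    (1 + S.Cstar * (S.hi - S.lo))
  rwa [mul_zero] at h

theorem diam_cyl_append_le (l : List S.A) {z : List S.A} {N : ℕ} (hz : z ∈ words S.A N) :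
    Metric.diam (S.cyl (l ++ z)) ≤ S.relScale N * Metric.diam (S.cyl l) := by
  have hI : 0 ≤ Metric.diam (S.cyl l) := Metric.diam_nonneg
  have hpow : 0 ≤ S.κp ^ N := pow_nonneg S.κp_pos.le N
  have hzle : Metric.diam (S.cyl z) ≤ S.κp ^ N * (S.hi - S.lo) := mem_words.1 hz ▸ S.diam_cyl_le z
  calc Metric.diam (S.cyl (l ++ z))
      ≤ S.Cstar * (Metric.diam (S.cyl l) * Metric.diam (S.cyl z)) := (S.hmult l z).1
    _ ≤ S.Cstar * (Metric.diam (S.cyl l) * (S.κp ^ N * (S.hi - S.lo))) :=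
      mul_le_mul_of_nonneg_left (mul_le_mul_of_nonneg_left hzle hI) S.Cstar_pos.le
    _ ≤ S.relScale N * Metric.diam (S.cyl l) := by
      rw [relScale]
      linarith [mul_nonneg hpow hI]

/-- The words `e`, `f` satisfy the bound in `MNL` with constant `CM`. -/
def NonConcentrated (CM : ℝ) (e f : List S.A) : Prop :=
  ∀ x₀ ∈ S.attract, ∀ u v : ℝ, u ≤ v →
    S.μ {x : ℝ | x ∈ S.attract ∧ S.Delta e f x x₀ ∈ Set.Icc u v} ≤ ENNReal.ofReal (CM * (v - u))

theorem abs_Delta_gW_le {N : ℕ} {e f : List S.A} (he : e ∈ words S.A N) (hf : f ∈ words S.A N)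
    (s s' c : List S.A) {x x' y σ m : ℝ} (hx : x ∈ Set.Icc S.lo S.hi)
    (hx' : x' ∈ Set.Icc S.lo S.hi) (hm : |S.gW c x - S.gW c x'| ≤ m)
    (hσ : |S.Delta (s ++ (e ++ c)) (s' ++ (f ++ c)) x y| ≤ σ)
    (hσ' : |S.Delta (s ++ (e ++ c)) (s' ++ (f ++ c)) x' y| ≤ σ) :
    |S.Delta e f (S.gW c x) (S.gW c x')| ≤ 2 * σ + 2 * (S.Cstar * (S.κp ^ N * m) ^ S.δ) := by
  have hcx := S.gW_mem c hx
  have hcx' := S.gW_mem c hx'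
  have hX : ∀ s g : List S.A, g ∈ words S.A N →
      |S.X s (S.gW g (S.gW c x)) (S.gW g (S.gW c x'))| ≤ S.Cstar * (S.κp ^ N * m) ^ S.δ := by
    intro s g hg
    obtain rfl := mem_words.1 hg
    refine S.abs_X_le s (S.gW_mem g hcx) (S.gW_mem g hcx') ?_
    exact (S.abs_gW_sub_mem_Icc g hcx hcx').2.trans
      (mul_le_mul_of_nonneg_left hm (pow_nonneg S.κp_pos.le _))
  have happend := S.Delta_append s s' e f c hx hx'
  have hsub := S.Delta_sub_Delta (s ++ (e ++ c)) (s' ++ (f ++ c)) x x' y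
  have hXe := abs_le.1 (hX s e he)
  have hXf := abs_le.1 (hX s' f hf)
  rw [abs_le] at *
  constructor <;> linarith [hXe.1, hXe.2, hXf.1, hXf.2, hσ.1, hσ.2, hσ'.1, hσ'.2]

namespace NonConcentrated

variable {S} {CM : ℝ} {N : ℕ} {e f : List S.A}

theorem ne (h : S.NonConcentrated CM e f) : e ≠ f := by
  rintro rfl
  obtain ⟨x₀, hx₀⟩ := S.attract_nonempty
  have hnull := h x₀ hx₀ 0 0 le_rfl
  simp only [FiniteIFS.Delta, sub_self, Set.Icc_self, Set.mem_singleton_iff, and_true, mul_zero,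
    ENNReal.ofReal_zero, nonpos_iff_eq_zero, Set.ofPred_mem_eq, S.measure_attract,
    one_ne_zero] at hnull

theorem wt_le_of_forall_child (h : S.NonConcentrated CM e f) (hCM : 0 ≤ CM) {l : List S.A}
    {ω : List S.A → ℝ} {ω₀ R m : ℝ} (hω : ∀ z ∈ words S.A N, ω z ∈ S.cyl (l ++ z))
    (hR : ∀ z ∈ words S.A N, |S.Delta e f (ω z) ω₀| ≤ R)
    (hm : ∀ z ∈ words S.A N, Metric.diam (S.cyl (l ++ z)) ≤ m) :
    S.wt l ≤ 2 * CM * (R + 2 * (S.Cstar * m ^ S.δ)) := by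
  obtain ⟨x₀, hx₀⟩ := S.attract_nonempty
  set R' := R + 2 * (S.Cstar * m ^ S.δ) with hR'
  set V := S.Delta e f ω₀ x₀
  have hnear : ∀ x ∈ S.attract, x ∈ S.cyl l → |S.Delta e f x x₀ - V| ≤ R' := by
    intro x hx hxl
    obtain ⟨z, hz, hxz⟩ := S.exists_mem_cyl_append hx hxl N
    have hhol := S.abs_Delta_le e f (S.cyl_subset _ hxz) (S.cyl_subset _ (hω z hz))
      ((S.abs_sub_le_diam_cyl hxz (hω z hz)).trans (hm z hz))
    have hx_sub := S.Delta_sub_Delta e f x (ω z) x₀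
    have hω_sub := S.Delta_sub_Delta e f (ω z) ω₀ x₀
    rw [show S.Delta e f x x₀ - V = S.Delta e f x (ω z) + S.Delta e f (ω z) ω₀ by linarith, hR',
      add_comm R]
    exact (abs_add_le _ _).trans (add_le_add hhol (hR z hz))
  have hsub : S.cyl l ∩ S.attract
      ⊆ {x | x ∈ S.attract ∧ S.Delta e f x x₀ ∈ Set.Icc (V - R') (V + R')} := fun x hx =>
    ⟨hx.2, Set.mem_Icc_iff_abs_le.1 (abs_sub_comm V _ ▸ hnear x hx.2 hx.1)⟩
  obtain ⟨x, hx⟩ : (S.cyl l ∩ S.attract).Nonempty := nonempty_of_measure_ne_zero <| by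
    rw [measure_inter_conull S.hsupp]
    exact (ENNReal.toReal_pos_iff.1 (S.wt_pos l)).1.ne'
  have hR'0 : 0 ≤ R' := (abs_nonneg _).trans (hnear x hx.2 hx.1)
  refine ENNReal.toReal_le_of_le_ofReal (by positivity) ?_
  calc S.μ (S.cyl l) = S.μ (S.cyl l ∩ S.attract) := (measure_inter_conull S.hsupp).symm
    _ ≤ ENNReal.ofReal (CM * (V + R' - (V - R'))) :=
      (measure_mono hsub).trans (h x₀ hx₀ _ _ (by linarith))
    _ = ENNReal.ofReal (2 * CM * R') := by ring_nf

theorem wt_append_le_of_forall_child (h : S.NonConcentrated CM e f) (hCM : 0 ≤ CM)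
    (he : e ∈ words S.A N) (hf : f ∈ words S.A N) (s s' c d : List S.A) {y σ : ℝ}
    (hclose : ∀ z ∈ words S.A N, ∃ t,
      |S.Delta (s ++ (e ++ c)) (s' ++ (f ++ c)) (S.refPt (d ++ z ++ t)) y| ≤ σ) :
    S.wt (c ++ d) ≤ 4 * CM * (σ
      + 2 * (S.Cstar * (S.relScale N * Metric.diam (S.cyl (c ++ d))) ^ S.δ)) := by
  choose! t ht using hclose
  set m := S.relScale N * Metric.diam (S.cyl (c ++ d))
  set x : List S.A → ℝ := fun z => S.refPt (d ++ z ++ t z)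
  have hω : ∀ z, S.gW c (x z) ∈ S.cyl (c ++ d ++ z) := fun z => by
    rw [List.append_assoc]
    exact S.gW_mem_cyl_append c (S.cyl_append_subset (d ++ z) (t z) (S.refPt_mem _))
  have hdiam : ∀ z, |S.gW c (x z) - S.gW c (x e)| ≤ Metric.diam (S.cyl (c ++ d)) := fun z =>
    S.abs_sub_le_diam_cyl (S.cyl_append_subset _ z (hω z)) (S.cyl_append_subset _ e (hω e))
  have hscale : (S.κp ^ N * Metric.diam (S.cyl (c ++ d))) ^ S.δ ≤ m ^ S.δ :=
    Real.rpow_le_rpow (mul_nonneg (pow_nonneg S.κp_pos.le N) Metric.diam_nonneg)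
      (mul_le_mul_of_nonneg_right (S.κp_pow_le_relScale N) Metric.diam_nonneg) S.hδ.1.le
  have hR : ∀ z ∈ words S.A N,
      |S.Delta e f (S.gW c (x z)) (S.gW c (x e))| ≤ 2 * σ + 2 * (S.Cstar * m ^ S.δ) := fun z hz =>
    (S.abs_Delta_gW_le he hf s s' c (S.refPt_mem_Icc _) (S.refPt_mem_Icc _) (hdiam z) (ht z hz)
      (ht e he)).trans (by linarith [mul_le_mul_of_nonneg_left hscale S.Cstar_pos.le])
  refine (h.wt_le_of_forall_child hCM (fun z _ => hω z) hR fun z hz =>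
    S.diam_cyl_append_le _ hz).trans_eq ?_
  ring

theorem exists_missing_child (h : S.NonConcentrated CM e f) (hCM : 0 ≤ CM)
    (he : e ∈ words S.A N) (hf : f ∈ words S.A N)
    (hsmall : 16 * S.Cstar ^ 2 * CM * S.relScale N ^ S.δ ≤ 1) (s s' c d : List S.A) {y σ : ℝ}
    (hσ : 8 * S.Cstar * CM * σ < Metric.diam (S.cyl (c ++ d)) ^ S.δ) :
    ∃ z ∈ words S.A N, ∀ t,
      ¬ |S.Delta (s ++ (e ++ c)) (s' ++ (f ++ c)) (S.refPt (d ++ z ++ t)) y| ≤ σ := by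
  by_contra! hclose
  have hwt := h.wt_append_le_of_forall_child hCM he hf s s' c d hclose
  rw [Real.mul_rpow (S.relScale_nonneg N) Metric.diam_nonneg] at hwt
  set I := Metric.diam (S.cyl (c ++ d)) ^ S.δ
  have hI : 0 ≤ I := Real.rpow_nonneg Metric.diam_nonneg _
  have hle : I ≤ 4 * S.Cstar * CM * σ + I / 2 :=
    calc I ≤ S.Cstar * S.wt (c ++ d) := (S.hfrostman _).2
      _ ≤ S.Cstar * (4 * CM * (σ + 2 * (S.Cstar * (S.relScale N ^ S.δ * I)))) :=
        mul_le_mul_of_nonneg_left hwt S.Cstar_pos.le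
      _ = 4 * S.Cstar * CM * σ + 16 * S.Cstar ^ 2 * CM * S.relScale N ^ S.δ * I / 2 := by ring
      _ ≤ 4 * S.Cstar * CM * σ + I / 2 := by linarith [mul_le_mul_of_nonneg_right hsmall hI]
  linarith

end NonConcentrated

end FiniteGibbsIFS

/-! ### Optimising the number of scales -/

section Exponents

theorem pow_div_le_inv_mul_rpow_inv_pow {q : ℝ} (hq : q ∈ Set.Ioc (0 : ℝ) 1) {N : ℕ} (hN : N ≠ 0)
    (n : ℕ) : q ^ (n / N) ≤ q⁻¹ * (q ^ (N : ℝ)⁻¹) ^ n := by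
  have hroot : (q ^ (N : ℝ)⁻¹) ^ N = q := Real.rpow_inv_natCast_pow hq.1.le hN
  rw [le_inv_mul_iff₀ hq.1, ← pow_succ']
  calc q ^ (n / N + 1) = (q ^ (N : ℝ)⁻¹) ^ (N * (n / N + 1)) := by rw [pow_mul, hroot]
    _ ≤ (q ^ (N : ℝ)⁻¹) ^ n := pow_le_pow_of_le_one (Real.rpow_nonneg hq.1.le _)
      (Real.rpow_le_one hq.1.le hq.2 (by positivity))
      (Nat.lt_mul_div_succ n (Nat.pos_of_ne_zero hN)).le

theorem exists_lt_rpow {τ q : ℝ} (hτ : τ ≠ 0) (hq : q < 1) :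
    ∃ Θ ∈ Set.Ioo (0 : ℝ) 1, q < τ ^ Θ := by
  have hlim : Filter.Tendsto (fun Θ : ℝ => τ ^ Θ) (𝓝[>] 0) (𝓝 1) := by
    have hcont : ContinuousAt (fun Θ : ℝ => τ ^ Θ) 0 := Real.continuousAt_const_rpow hτ
    simpa using hcont.tendsto.mono_left nhdsWithin_le_nhds
  obtain ⟨Θ, hlt, hΘ⟩ :=
    ((hlim.eventually_const_lt hq).and (Ioo_mem_nhdsGT one_pos)).exists
  exact ⟨Θ, hΘ, hlt⟩

theorem le_rpow_or_le_pow_div_of_forall_scale {c τ q C Θ σ P : ℝ} {n N : ℕ} (hc : 0 < c)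
    (hτ : τ ∈ Set.Ioo (0 : ℝ) 1) (hq : q ∈ Set.Ioo (0 : ℝ) 1) (hC : 1 ≤ C) (hN : N ≠ 0)
    (hΘ : 0 ≤ Θ) (hqΘ : q ≤ τ ^ Θ) (hP1 : P ≤ 1)
    (hP : ∀ k : ℕ, k * N ≤ n → σ ≤ c * τ ^ k → P ≤ C * q ^ k) :
    P ≤ C * q⁻¹ * (σ / c) ^ Θ ∨ P ≤ C * q ^ (n / N) := by
  obtain ⟨hq0, hq1⟩ := hq
  have hD : 1 ≤ C * q⁻¹ := one_le_mul_of_one_le_of_one_le hC ((one_le_inv₀ hq0).2 hq1.le)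
  rcases le_or_gt σ (c * τ ^ (n / N)) with hσn | hσn
  · exact .inr (hP _ (Nat.div_mul_le_self n N) hσn)
  left
  rcases le_or_gt (σ / c) 1 with hσc | hσc
  · have hσ0 : 0 < σ / c := div_pos ((mul_pos hc (pow_pos hτ.1 _)).trans hσn) hc
    obtain ⟨m, hm, hm'⟩ := exists_nat_pow_near_of_lt_one hσ0 hσc hτ.1 hτ.2
    have hmn : m ≤ n / N :=
      ((pow_lt_pow_iff_right_of_lt_one₀ hτ.1 hτ.2).1
        (((lt_div_iff₀' hc).2 hσn).trans_le hm')).le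
    calc P ≤ C * q ^ m := hP m ((Nat.le_div_iff_mul_le (Nat.pos_of_ne_zero hN)).1 hmn)
          ((div_le_iff₀' hc).1 hm')
      _ = C * q⁻¹ * q ^ (m + 1) := by field_simp; ring
      _ ≤ C * q⁻¹ * (τ ^ Θ) ^ (m + 1) := by gcongr
      _ = C * q⁻¹ * (τ ^ (m + 1)) ^ Θ := by rw [Real.rpow_pow_comm hτ.1.le]
      _ ≤ C * q⁻¹ * (σ / c) ^ Θ := mul_le_mul_of_nonneg_left
          (Real.rpow_le_rpow (pow_nonneg hτ.1.le _) hm.le hΘ) (zero_le_one.trans hD)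
  · exact hP1.trans (one_le_mul_of_one_le_of_one_le hD (Real.one_le_rpow hσc.le hΘ))

theorem exists_exponents_of_forall_scale {c τ q C : ℝ} {N : ℕ} (hc : 0 < c)
    (hτ : τ ∈ Set.Ioo (0 : ℝ) 1) (hq : q ∈ Set.Ioo (0 : ℝ) 1) (hC : 1 ≤ C) (hN : N ≠ 0) :
    ∃ ρ ∈ Set.Ioo (0 : ℝ) 1, ∃ Θ ∈ Set.Ioo (0 : ℝ) 1, ∃ CQ : ℝ, 0 < CQ ∧
      ∀ σ ≥ 0, ∀ (n : ℕ) (P : ℝ), P ≤ 1 →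
        (∀ k : ℕ, k * N ≤ n → σ ≤ c * τ ^ k → P ≤ C * q ^ k) → P ≤ CQ * (σ ^ Θ + ρ ^ n) := by
  have hq0 := hq.1
  have hC0 : 0 < C := zero_lt_one.trans_le hC
  obtain ⟨Θ, hΘ, hqΘ⟩ := exists_lt_rpow hτ.1.ne' hq.2
  have hcΘ : 0 < c ^ Θ := Real.rpow_pos_of_pos hc Θ
  set ρ := q ^ (N : ℝ)⁻¹
  have hρ : ρ ∈ Set.Ioo (0 : ℝ) 1 :=
    ⟨Real.rpow_pos_of_pos hq0 _, Real.rpow_lt_one hq0.le hq.2 (by positivity)⟩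
  refine ⟨ρ, hρ, Θ, hΘ, C * q⁻¹ * (1 + (c ^ Θ)⁻¹), by positivity, fun σ hσ n P hP1 hP => ?_⟩
  have hσΘ : 0 ≤ σ ^ Θ := Real.rpow_nonneg hσ Θ
  have hρn : 0 ≤ ρ ^ n := pow_nonneg hρ.1.le n
  rcases le_rpow_or_le_pow_div_of_forall_scale hc hτ hq hC hN hΘ.1.le hqΘ.le hP1 hP with h | h
  · calc P ≤ C * q⁻¹ * (σ / c) ^ Θ := h
      _ = C * q⁻¹ * ((c ^ Θ)⁻¹ * σ ^ Θ) := by rw [Real.div_rpow hσ hc.le, div_eq_inv_mul]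
      _ ≤ C * q⁻¹ * ((1 + (c ^ Θ)⁻¹) * (σ ^ Θ + ρ ^ n)) := by gcongr <;> linarith
      _ = _ := (mul_assoc _ _ _).symm
  · calc P ≤ C * q ^ (n / N) := h
      _ ≤ C * (q⁻¹ * ρ ^ n) :=
        mul_le_mul_of_nonneg_left (pow_div_le_inv_mul_rpow_inv_pow ⟨hq0, hq.2.le⟩ hN n) hC0.le
      _ = C * q⁻¹ * (1 * ρ ^ n) := by ring
      _ ≤ C * q⁻¹ * ((1 + (c ^ Θ)⁻¹) * (σ ^ Θ + ρ ^ n)) := by gcongr <;> linarith [inv_pos.2 hcΘ]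
      _ = _ := (mul_assoc _ _ _).symm

end Exponents

namespace FiniteGibbsIFS

variable (S : FiniteGibbsIFS)

/-- The four-fold sum in `QNL` as a real number, arranged as an average over `b` and `d`. -/
noncomputable def concentration (u v : ℝ) (n : ℕ) : ℝ :=
  ∑ b ∈ words S.A n, ∑ d ∈ words S.A n, S.wt b * S.wt d * ∑ a ∈ words S.A n, S.wt a *
    ∑ c ∈ words S.A n, {c | S.Delta a b (S.refPt c) (S.refPt d) ∈ Set.Icc u v}.indicator S.wt c

theorem measure_cyl_mul_indicator_eq_ofReal (u v : ℝ) (a b c d : List S.A) :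
    (S.μ (S.cyl a) * S.μ (S.cyl b) * S.μ (S.cyl c) * S.μ (S.cyl d)) *
        Set.indicator (Set.Icc u v) (fun _ => (1 : ℝ≥0∞)) (S.Delta a b (S.refPt c) (S.refPt d))
      = ENNReal.ofReal (S.wt b * S.wt d * (S.wt a *
          {c | S.Delta a b (S.refPt c) (S.refPt d) ∈ Set.Icc u v}.indicator S.wt c)) := by
  have := S.hprob
  have hμ : ∀ l, S.μ (S.cyl l) = ENNReal.ofReal (S.wt l) := fun l =>
    (ENNReal.ofReal_toReal (measure_ne_top _ _)).symm
  have ha := S.wt_nonneg a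
  have hb := S.wt_nonneg b
  have hc := S.wt_nonneg c
  rw [hμ, hμ, hμ, hμ, ← ENNReal.ofReal_mul ha, ← ENNReal.ofReal_mul (mul_nonneg ha hb),
    ← ENNReal.ofReal_mul (mul_nonneg (mul_nonneg ha hb) hc)]
  by_cases h : S.Delta a b (S.refPt c) (S.refPt d) ∈ Set.Icc u v
  · simp only [Set.indicator, Set.mem_ofPred_eq, h, if_true, mul_one]
    ring_nf
  · simp only [Set.indicator, Set.mem_ofPred_eq, h, if_false, mul_zero, ENNReal.ofReal_zero]

theorem tsum_eq_ofReal_concentration (u v : ℝ) (n : ℕ) :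
    ∑' q : (Fin n → S.A) × (Fin n → S.A) × (Fin n → S.A) × (Fin n → S.A),
      (S.μ (S.cyl (List.ofFn q.1)) * S.μ (S.cyl (List.ofFn q.2.1)) *
          S.μ (S.cyl (List.ofFn q.2.2.1)) * S.μ (S.cyl (List.ofFn q.2.2.2))) *
        Set.indicator (Set.Icc u v) (fun _ => (1 : ℝ≥0∞))
          (S.Delta (List.ofFn q.1) (List.ofFn q.2.1)
            (S.refPt (List.ofFn q.2.2.1)) (S.refPt (List.ofFn q.2.2.2)))
      = ENNReal.ofReal (S.concentration u v n) := by
  have := Fintype.ofFinite S.A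
  simp only [measure_cyl_mul_indicator_eq_ofReal, tsum_fintype]
  rw [← ENNReal.ofReal_sum_of_nonneg fun q _ =>
    mul_nonneg (mul_nonneg (S.wt_nonneg _) (S.wt_nonneg _))
      (mul_nonneg (S.wt_nonneg _) (Set.indicator_nonneg (fun _ _ => S.wt_nonneg _) _))]
  simp only [concentration, Finset.mul_sum, sum_words_eq_sum_ofFn, Fintype.sum_prod_type]
  rw [Finset.sum_comm]
  refine congrArg _ (Finset.sum_congr rfl fun b _ => ?_)
  rw [Finset.sum_comm_cycle]

theorem concentration_le {u v : ℝ} {n : ℕ} {M : ℝ} (hM0 : 0 ≤ M)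
    (hM : ∀ (b : List S.A) (y : ℝ), ∑ a ∈ words S.A n, S.wt a *
      ∑ c ∈ words S.A n, {c | S.Delta a b (S.refPt c) y ∈ Set.Icc u v}.indicator S.wt c ≤ M) :
    S.concentration u v n ≤ M := by
  have h0 : 0 ≤ ∑ d ∈ words S.A n, S.wt d := Finset.sum_nonneg fun _ _ => S.wt_nonneg _
  calc S.concentration u v n
      ≤ ∑ b ∈ words S.A n, ∑ d ∈ words S.A n, S.wt b * S.wt d * M :=
        Finset.sum_le_sum fun b _ => Finset.sum_le_sum fun d _ =>
          mul_le_mul_of_nonneg_left (hM b _) (mul_nonneg (S.wt_nonneg b) (S.wt_nonneg d))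
    _ = (∑ b ∈ words S.A n, S.wt b) * (∑ d ∈ words S.A n, S.wt d) * M := by
        rw [Finset.sum_mul_sum, Finset.sum_mul]
        exact Finset.sum_congr rfl fun b _ => (Finset.sum_mul _ _ _).symm
    _ ≤ 1 * M := mul_le_mul_of_nonneg_right
        (mul_le_one₀ (S.sum_wt_le_one n) h0 (S.sum_wt_le_one n)) hM0
    _ = M := one_mul M

theorem sum_indicator_wt_le_one (T : Set (List S.A)) (n : ℕ) :
    ∑ c ∈ words S.A n, T.indicator S.wt c ≤ 1 :=
  (Finset.sum_le_sum fun c _ => Set.indicator_le_self' (fun _ _ => S.wt_nonneg _) c).trans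
    (S.sum_wt_le_one n)

theorem concentration_le_one (u v : ℝ) (n : ℕ) : S.concentration u v n ≤ 1 :=
  S.concentration_le zero_le_one fun _ _ => (Finset.sum_le_sum fun a _ =>
    mul_le_of_le_one_right (S.wt_nonneg a) (S.sum_indicator_wt_le_one _ n)).trans
      (S.sum_wt_le_one n)

namespace NonConcentrated

variable {S} {CM p : ℝ} {N : ℕ} {e f : List S.A}

theorem sum_indicator_le (h : S.NonConcentrated CM e f) (hCM : 0 ≤ CM) (he : e ∈ words S.A N)
    (hf : f ∈ words S.A N) (hsmall : 16 * S.Cstar ^ 2 * CM * S.relScale N ^ S.δ ≤ 1) (hp : p ≤ 1)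
    (hchild : HasChildProportion S.wt N p) (s s' c : List S.A) (y : ℝ) {σ : ℝ} {k : ℕ}
    (hσ : ∀ d : List S.A, d.length ≤ k * N →
      8 * S.Cstar * CM * σ < Metric.diam (S.cyl (c ++ d)) ^ S.δ) (r : ℕ) :
    ∑ D ∈ words S.A (k * N + r), {D | |S.Delta (s ++ (e ++ c)) (s' ++ (f ++ c)) (S.refPt D) y|
      ≤ σ}.indicator S.wt D ≤ (1 - p) ^ k := by
  have hmass := descendantSum_indicator_le_of_missing_child
    (T := {D | |S.Delta (s ++ (e ++ c)) (s' ++ (f ++ c)) (S.refPt D) y| ≤ σ}) S.wt_nonneg hp hchild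
    (fun d hd => h.exists_missing_child hCM he hf hsmall s s' c d (y := y) (hσ d hd)) r k []
    (by simp)
  rw [descendantSum_nil, descendantSum_nil] at hmass
  exact hmass.trans (mul_le_of_le_one_right (pow_nonneg (sub_nonneg.2 hp) k) (S.sum_wt_le_one _))

theorem sum_wt_mul_sum_indicator_le (h : S.NonConcentrated CM e f) (hCM : 0 ≤ CM)
    (he : e ∈ words S.A N) (hf : f ∈ words S.A N)
    (hsmall : 16 * S.Cstar ^ 2 * CM * S.relScale N ^ S.δ ≤ 1) (hp : p ∈ Set.Ioc (0 : ℝ) 1)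
    (hchild : HasChildProportion S.wt N p)
    (hchild' : HasChildProportion (fun l => S.wt l.reverse) N p) {u v : ℝ} {k : ℕ}
    (huv : ∀ l : List S.A, l.length ≤ 2 * (k * N) →
      8 * S.Cstar * CM * (v - u) < Metric.diam (S.cyl l) ^ S.δ) (r : ℕ) (b : List S.A) (y : ℝ) :
    ∑ a ∈ words S.A (k * N + r), S.wt a * ∑ D ∈ words S.A (k * N + r),
        {D | S.Delta a b (S.refPt D) y ∈ Set.Icc u v}.indicator S.wt D
      ≤ (1 + 2 / p) * (1 - p / 2) ^ k := by
  obtain ⟨hp0, hp1⟩ := hp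
  set W := words S.A (k * N + r)
  set ε := (1 - p / 2) ^ k with hε
  have hε0 : 0 ≤ ε := pow_nonneg (by linarith) k
  -- Words are read backwards, so that those ending in `c` are the descendants of `c.reverse`.
  set B : List S.A → Set (List S.A) := fun l =>
    {D | S.Delta l.reverse b (S.refPt D) y ∈ Set.Icc u v}
  have hB : ∀ c : List S.A, c.length ≤ k * N → ∀ t t',
      ∑ D ∈ W, (B (c ++ e.reverse ++ t) ∩ B (c ++ f.reverse ++ t')).indicator S.wt D ≤ ε ^ 2 := by
    intro c hc t t'
    have hsub : B (c ++ e.reverse ++ t) ∩ B (c ++ f.reverse ++ t') ⊆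
        {D | |S.Delta (t.reverse ++ (e ++ c.reverse)) (t'.reverse ++ (f ++ c.reverse))
          (S.refPt D) y| ≤ v - u} := by
      rintro D ⟨hD, hD'⟩
      simp only [B, Set.mem_ofPred_eq, List.reverse_append, List.reverse_reverse] at hD hD' ⊢
      have := abs_sub_le_of_le_of_le hD.1 hD.2 hD'.1 hD'.2
      simpa only [FiniteGibbsIFS.Delta, FiniteIFS.Delta, sub_sub_sub_cancel_right] using this
    calc ∑ D ∈ W, (B (c ++ e.reverse ++ t) ∩ B (c ++ f.reverse ++ t')).indicator S.wt D
        ≤ _ := Finset.sum_le_sum fun D _ =>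
          Set.indicator_le_indicator_of_subset hsub (fun _ => S.wt_nonneg _) D
      _ ≤ (1 - p) ^ k := h.sum_indicator_le hCM he hf hsmall hp1 hchild _ _ _ y
          (fun d hd => huv _ (by simp; lia)) r
      _ ≤ ((1 - p / 2) ^ 2) ^ k :=
          pow_le_pow_left₀ (sub_nonneg.2 hp1) (by linarith [sq_nonneg p]) k
      _ = ε ^ 2 := by rw [hε, ← pow_mul, ← pow_mul, mul_comm]
  have hsum := sum_words_mul_sum_indicator_le S.wt_nonneg (S.sum_wt_le_one _)
    (fun l => S.wt_nonneg l.reverse) ⟨hp0, hp1⟩ hε0 hchild' (by simpa using he) (by simpa using hf)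
    (List.reverse_injective.ne h.ne) B k r hB
  rw [sum_words_reverse (fun a => S.wt a * ∑ D ∈ W,
      {D | S.Delta a b (S.refPt D) y ∈ Set.Icc u v}.indicator S.wt D),
    sum_words_reverse S.wt] at hsum
  calc _ ≤ (ε + 2 / p * ε) * ∑ l ∈ W, S.wt l := hsum
    _ ≤ (ε + 2 / p * ε) * 1 := by gcongr; exact S.sum_wt_le_one _
    _ = (1 + 2 / p) * ε := by ring

end NonConcentrated

theorem le_diam_cyl_rpow {l : List S.A} {n : ℕ} (hl : l.length ≤ n) :
    (S.κm ^ n) ^ S.δ * (S.hi - S.lo) ^ S.δ ≤ Metric.diam (S.cyl l) ^ S.δ := by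
  have hJ : 0 ≤ S.hi - S.lo := sub_nonneg.2 S.hlohi.le
  have hpow : S.κm ^ n ≤ S.κm ^ l.length := pow_le_pow_of_le_one S.hκm.le S.κm_lt_one.le hl
  rw [← Real.mul_rpow (pow_nonneg S.hκm.le n) hJ]
  exact Real.rpow_le_rpow (mul_nonneg (pow_nonneg S.hκm.le n) hJ)
    ((mul_le_mul_of_nonneg_right hpow hJ).trans (S.le_diam_cyl l)) S.hδ.1.le

theorem exists_forall_lt_diam_cyl_rpow {K : ℝ} (hK : 0 < K) {M : ℕ} (hM : M ≠ 0) :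
    ∃ c > 0, ∃ τ ∈ Set.Ioo (0 : ℝ) 1, ∀ (σ : ℝ) (k : ℕ), σ ≤ c * τ ^ k →
      ∀ l : List S.A, l.length ≤ k * M → K * σ < Metric.diam (S.cyl l) ^ S.δ := by
  have hJ : 0 < (S.hi - S.lo) ^ S.δ := Real.rpow_pos_of_pos (sub_pos.2 S.hlohi) _
  have hκ : 0 < S.κm ^ M := pow_pos S.hκm M
  refine ⟨(S.hi - S.lo) ^ S.δ / (2 * K), by positivity, (S.κm ^ M) ^ S.δ,
    ⟨Real.rpow_pos_of_pos hκ _,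
      Real.rpow_lt_one hκ.le (pow_lt_one₀ S.hκm.le S.κm_lt_one hM) S.hδ.1⟩, fun σ k hσ l hl => ?_⟩
  rw [Real.rpow_pow_comm hκ.le, ← pow_mul, mul_comm M] at hσ
  have hpos : 0 < (S.κm ^ (k * M)) ^ S.δ * (S.hi - S.lo) ^ S.δ :=
    mul_pos (Real.rpow_pos_of_pos (pow_pos S.hκm _) _) hJ
  calc K * σ ≤ K * ((S.hi - S.lo) ^ S.δ / (2 * K) * (S.κm ^ (k * M)) ^ S.δ) := by gcongr
    _ = (S.κm ^ (k * M)) ^ S.δ * (S.hi - S.lo) ^ S.δ / 2 := by field_simp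
    _ < (S.κm ^ (k * M)) ^ S.δ * (S.hi - S.lo) ^ S.δ := half_lt_self hpos
    _ ≤ Metric.diam (S.cyl l) ^ S.δ := S.le_diam_cyl_rpow hl

/-- The Quantitative Non-Linearity condition (QNL): the average over `a, b, c, d ∈ 𝒜ⁿ`, with
Gibbs weights, of `1_I(Δ_n((a,x_c),(b,x_d)))` is at most `C_QNL (|I|^Θ + ρⁿ)`. -/
def QNL : Prop :=
  ∃ ρ ∈ Set.Ioo (0 : ℝ) 1, ∃ Θ ∈ Set.Ioo (0 : ℝ) 1, ∃ CQ : ℝ, 0 < CQ ∧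
    ∀ u v : ℝ, u ≤ v → ∀ n : ℕ, 1 ≤ n →
      ∑' q : (Fin n → S.A) × (Fin n → S.A) × (Fin n → S.A) × (Fin n → S.A),
        (S.μ (S.cyl (List.ofFn q.1)) * S.μ (S.cyl (List.ofFn q.2.1)) *
            S.μ (S.cyl (List.ofFn q.2.2.1)) * S.μ (S.cyl (List.ofFn q.2.2.2))) *
          Set.indicator (Set.Icc u v) (fun _ => (1 : ℝ≥0∞))
            (S.Delta (List.ofFn q.1) (List.ofFn q.2.1)
              (S.refPt (List.ofFn q.2.2.1)) (S.refPt (List.ofFn q.2.2.2)))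
      ≤ ENNReal.ofReal (CQ * ((v - u) ^ Θ + ρ ^ n))

theorem NonConcentrated.qnl {S : FiniteGibbsIFS} {CM : ℝ} {N : ℕ} {e f : List S.A}
    (h : S.NonConcentrated CM e f) (hCM : 0 < CM) (hN : N ≠ 0) (he : e ∈ words S.A N)
    (hf : f ∈ words S.A N) (hsmall : 16 * S.Cstar ^ 2 * CM * S.relScale N ^ S.δ ≤ 1) : S.QNL := by
  obtain ⟨p, hp, hchild, hchild'⟩ := S.exists_hasChildProportion_wt N
  have hK : 0 < 8 * S.Cstar * CM := mul_pos (mul_pos (by norm_num) S.Cstar_pos) hCM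
  obtain ⟨c, hc, τ, hτ, hscale⟩ := S.exists_forall_lt_diam_cyl_rpow hK (mul_ne_zero two_ne_zero hN)
  have hq : 1 - p / 2 ∈ Set.Ioo (0 : ℝ) 1 := ⟨by linarith [hp.2], by linarith [hp.1]⟩
  have hC : 1 ≤ 1 + 2 / p := le_add_of_nonneg_right (div_nonneg zero_le_two hp.1.le)
  obtain ⟨ρ, hρ, Θ, hΘ, CQ, hCQ, hbound⟩ := exists_exponents_of_forall_scale hc hτ hq hC hN
  refine ⟨ρ, hρ, Θ, hΘ, CQ, hCQ, fun u v huv n _ => ?_⟩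
  rw [S.tsum_eq_ofReal_concentration]
  refine ENNReal.ofReal_le_ofReal <|
    hbound _ (sub_nonneg.2 huv) n _ (S.concentration_le_one u v n) fun k hk hσ => ?_
  obtain ⟨r, rfl⟩ := Nat.exists_eq_add_of_le hk
  refine S.concentration_le (mul_nonneg (zero_le_one.trans hC) (pow_nonneg hq.1.le k)) fun b y =>
    h.sum_wt_mul_sum_indicator_le hCM.le he hf hsmall hp hchild hchild' (fun l hl => ?_) r b y
  exact hscale _ k hσ l (by lia)

end FiniteGibbsIFS

theorem QNL_of_MNL_general (S : FiniteGibbsIFS) (CM : ℝ) (hCM : 0 < CM)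
    (h : ∃ᶠ N in Filter.atTop, ∃ e ∈ words S.A N, ∃ f ∈ words S.A N, S.NonConcentrated CM e f) :
    S.QNL := by
  have hlim : Filter.Tendsto (fun N => 16 * S.Cstar ^ 2 * CM * S.relScale N ^ S.δ)
      Filter.atTop (𝓝 0) := by
    have hpow := (S.tendsto_relScale.rpow_const (.inr S.hδ.1.le)).const_mul (16 * S.Cstar ^ 2 * CM)
    rwa [Real.zero_rpow S.hδ.1.ne', mul_zero] at hpow
  obtain ⟨N, ⟨e, he, f, hf, hnc⟩, hsmall, hN⟩ := (h.and_eventually <|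
    (hlim.eventually_le_const one_pos).and (Filter.eventually_ne_atTop 0)).exists
  exact hnc.qnl hCM hN he hf hsmall

/-- **(MNL) implies (QNL)** (Theorem 1.2, MNL part).

In the finite fully-branched `C^{1+α}` IFS setting with its dimension-`δ` Gibbs measure
`μ`, if the Measure Non-Linearity condition (MNL) holds, then Quantitative Non-Linearity
holds: there are `ρ, Θ ∈ (0,1)` and `C_QNL > 0` such that for every interval `I ⊆ ℝ`
and every `n ≥ 1`,
`Σ_{a,b,c,d∈𝒜ⁿ} μ(I_a)μ(I_b)μ(I_c)μ(I_d) 1_I(Δ_n((a,x_c),(b,x_d))) ≤ C_QNL(|I|^Θ + ρⁿ)`. -/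
theorem QNL_of_MNL (S : FiniteGibbsIFS) (CM : ℝ) (hCM : 0 < CM) (hMNL : S.MNL CM) :
    ∃ ρ ∈ Set.Ioo (0:ℝ) 1, ∃ Θ ∈ Set.Ioo (0:ℝ) 1, ∃ CQ : ℝ, 0 < CQ ∧
      ∀ u v : ℝ, u ≤ v → ∀ n : ℕ, 1 ≤ n →
        ∑' q : (Fin n → S.A) × (Fin n → S.A) × (Fin n → S.A) × (Fin n → S.A),
          (S.μ (S.cyl (List.ofFn q.1)) * S.μ (S.cyl (List.ofFn q.2.1)) *
              S.μ (S.cyl (List.ofFn q.2.2.1)) * S.μ (S.cyl (List.ofFn q.2.2.2))) *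
            Set.indicator (Set.Icc u v) (fun _ => (1 : ℝ≥0∞))
              (S.Delta (List.ofFn q.1) (List.ofFn q.2.1)
                (S.refPt (List.ofFn q.2.2.1)) (S.refPt (List.ofFn q.2.2.2)))
        ≤ ENNReal.ofReal (CQ * ((v - u) ^ Θ + ρ ^ n)) :=
  QNL_of_MNL_general S CM hCM <| Filter.Eventually.frequently <|
    (Filter.eventually_ge_atTop 1).mono fun N hN =>
      let ⟨a, b, hab⟩ := hMNL N hN
      ⟨List.ofFn a, by simp, List.ofFn b, by simp, hab⟩
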